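/- Let m ≤ n, let B ∈ ℝ^{m×n} have a full singular value decomposition B = U diag(Σ) Vᵀ, where U ∈ ℝ^{m×m} and V ∈ ℝ^{n×n} are orthogonal and Σ ∈ ℝ^m is the nonincreasing vector of singular values of B. Let λ > 0, β > 0, and let weights w ∈ ℝ^m satisfy 0 < w₁ ≤ w₂ ≤ ⋯ ≤ w_m. Then the matrix X* = U diag(d) Vᵀ, where d_i = max(Σ_i − λ w_i/(2β), 0) for i = 1,…,m, is a global minimizer over ℝ^{m×n} of the function G(X) = (β/2)‖X − B‖_F² + (λ/2) ∑_{i=1}^m w_i σ_i(X). -/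

import Mathlib

open Filter Topology Matrix

/-- The singular values of a real `m × n` matrix (`m ≤ n`), in nonincreasing order:
`sval X i` is the `(i+1)`-th largest singular value of `X`. -/
noncomputable def sval {m n : ℕ} (X : Matrix (Fin m) (Fin n) ℝ) : Fin m → ℝ :=
  fun i =>
    let ev : Fin m → ℝ := (Matrix.isHermitian_mul_conjTranspose_self X).eigenvalues
    Real.sqrt (ev (Tuple.sort ev i.rev))

/-- The `m × n` matrix with the vector `d` on its main diagonal and zeros elsewhere. -/
def rdiag {m n : ℕ} (d : Fin m → ℝ) : Matrix (Fin m) (Fin n) ℝ :=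
  Matrix.of fun i j => if (j : ℕ) = (i : ℕ) then d i else 0

/-- The Frobenius norm of a matrix. -/
noncomputable def frobNorm {m n : ℕ} (X : Matrix (Fin m) (Fin n) ℝ) : ℝ :=
  Real.sqrt (∑ i, ∑ j, (X i j) ^ 2)

lemma aux_frob {m n : ℕ} (X : Matrix (Fin m) (Fin n) ℝ) : frobNorm X ^ 2 = (X * Xᵀ).trace := by
  unfold frobNorm
  rw [Real.sq_sqrt (by positivity)]
  simp [Matrix.trace, Matrix.mul_apply, sq]

lemma aux_rdiag {m n : ℕ} (hmn : m ≤ n) (d e : Fin m → ℝ) :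
    (rdiag d : Matrix (Fin m) (Fin n) ℝ) * (rdiag e : Matrix (Fin m) (Fin n) ℝ)ᵀ
      = diagonal (fun i => d i * e i) := by
  ext i j
  rw [Matrix.mul_apply, Finset.sum_eq_single (Fin.castLE hmn i)]
  · by_cases h : i = j
    · subst h; simp [rdiag]
    · have : (i : ℕ) ≠ j := fun h' => h (Fin.ext h')
      simp [rdiag, h, this]
  · intro b _ hb
    have : (b : ℕ) ≠ i := fun h' => hb (Fin.ext h')
    simp [rdiag, this]
  · simp

lemma aux_sval_nonneg {m n : ℕ} (X : Matrix (Fin m) (Fin n) ℝ) (i) : 0 ≤ sval X i :=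
  Real.sqrt_nonneg _

lemma aux_sval_anti {m n : ℕ} (X : Matrix (Fin m) (Fin n) ℝ) : Antitone (sval X) := by
  intro i j h
  unfold sval
  apply Real.sqrt_le_sqrt
  exact Tuple.monotone_sort (Matrix.isHermitian_mul_conjTranspose_self X).eigenvalues
    (Fin.rev_le_rev.2 h)

lemma aux_decomp {m n : ℕ} (X : Matrix (Fin m) (Fin n) ℝ) :
    ∃ W : Matrix (Fin m) (Fin m) ℝ, Wᵀ * W = 1 ∧ W * Wᵀ = 1 ∧
      Wᵀ * (X * Xᵀ) * W = diagonal (fun i => sval X i * sval X i) := by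
  set hA := Matrix.isHermitian_mul_conjTranspose_self X with hAdef
  set ev := hA.eigenvalues with hev
  let τ : Equiv.Perm (Fin m) := Fin.revPerm.trans (Tuple.sort ev)
  let P : Matrix (Fin m) (Fin m) ℝ := hA.eigenvectorUnitary
  have hP1 : Pᵀ * P = 1 := by
    have := Unitary.coe_star_mul_self hA.eigenvectorUnitary
    rw [Matrix.star_eq_conjTranspose, Matrix.conjTranspose_eq_transpose_of_trivial] at this
    exact this
  have hP3 : Pᵀ * (X * Xᵀ) * P = diagonal ev := by
    have := hA.conjStarAlgAut_star_eigenvectorUnitary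
    rw [Unitary.conjStarAlgAut_star_apply, Matrix.star_eq_conjTranspose] at this
    simp only [Matrix.conjTranspose_eq_transpose_of_trivial] at this
    exact this
  have h1 : (P.submatrix id τ)ᵀ * P.submatrix id τ = 1 := by
    have : (P.submatrix id τ)ᵀ * P.submatrix id τ = (Pᵀ * P).submatrix τ τ := by
      ext i j
      simp [Matrix.mul_apply]
    rw [this, hP1]; simp
  refine ⟨P.submatrix id τ, h1, mul_eq_one_comm.1 h1, ?_⟩
  have h2 : (P.submatrix id τ)ᵀ * (X * Xᵀ) * P.submatrix id τ
      = (Pᵀ * (X * Xᵀ) * P).submatrix τ τ := by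
    ext i j
    simp [Matrix.mul_apply]
  rw [h2, hP3]
  ext i j
  by_cases h : i = j
  · subst h
    have hp : 0 ≤ ev (τ i) := (Matrix.posSemidef_self_mul_conjTranspose X).eigenvalues_nonneg _
    simp only [submatrix_apply, diagonal_apply_eq]
    exact (Real.mul_self_sqrt hp).symm
  · simp [h]

lemma aux_sval_eq {m n : ℕ} (X : Matrix (Fin m) (Fin n) ℝ) (U : Matrix (Fin m) (Fin m) ℝ)
    (hU : Uᵀ * U = 1) (d : Fin m → ℝ) (hd0 : ∀ i, 0 ≤ d i) (hd : Antitone d)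
    (hX : X * Xᵀ = U * diagonal (fun i => d i * d i) * Uᵀ) : sval X = d := by
  set hA := Matrix.isHermitian_mul_conjTranspose_self X with hAdef
  set ev := hA.eigenvalues with hev
  have hroots : (X * Xᵀ).charpoly.roots = Multiset.map ev Finset.univ.val := by
    have := hA.roots_charpoly_eq_eigenvalues
    exact this
  have hroots2 : (X * Xᵀ).charpoly.roots = Multiset.map (fun i => d i * d i) Finset.univ.val := by
    rw [hX, Matrix.charpoly_mul_comm, ← Matrix.mul_assoc, hU, Matrix.one_mul,
      Matrix.charpoly_diagonal, Polynomial.roots_prod]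
    · simp only [Polynomial.roots_X_sub_C, Multiset.bind_singleton]
    · exact Finset.prod_ne_zero_iff.2 fun i _ => Polynomial.X_sub_C_ne_zero _
  have hperm : (List.ofFn ev).Perm (List.ofFn fun i => d i * d i) := by
    rw [hroots, Fin.univ_val_map, Fin.univ_val_map] at hroots2
    exact Multiset.coe_eq_coe.1 hroots2
  have h1 : ev ∘ Tuple.sort ev = (fun i => d i * d i) ∘ Fin.revPerm := by
    apply List.ofFn_injective
    have hm : Monotone ((fun i => d i * d i) ∘ (Fin.revPerm : Equiv.Perm (Fin m))) := by
      intro i j h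
      have := hd (Fin.rev_le_rev.2 h)
      exact mul_self_le_mul_self (hd0 _) this
    exact (((Equiv.Perm.ofFn_comp_perm _ ev).trans hperm).trans
      (Equiv.Perm.ofFn_comp_perm Fin.revPerm _).symm).eq_of_pairwise'
      (Tuple.monotone_sort ev).sortedLE_ofFn.pairwise hm.sortedLE_ofFn.pairwise
  funext i
  have := congrFun h1 i.rev
  simp only [Function.comp, Fin.revPerm_apply, Fin.rev_rev] at this
  change Real.sqrt (ev (Tuple.sort ev i.rev)) = d i
  rw [this, Real.sqrt_mul_self (hd0 i)]

lemma aux_dual_nat (m : ℕ) (s t : ℕ → ℝ) (hs : Antitone s) (ht : Antitone t)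
    (hs0 : ∀ i, 0 ≤ s i) (ht0 : ∀ i, 0 ≤ t i) (hsm : s m = 0) :
    ∃ a b : ℕ → ℝ, (∀ i, 0 ≤ a i) ∧ (∀ i, 0 ≤ b i) ∧ (∀ i < m, a i + b i = s i * t i) ∧
      ∀ i < m, ∀ k < m, s i * t k ≤ a i + b k := by
  let a : ℕ → ℝ := fun i => ∑ j ∈ Finset.Ico i m, t j * (s j - s (j+1))
  let b : ℕ → ℝ := fun i => ∑ j ∈ Finset.Ico i m, s (j+1) * (t j - t (j+1))
  have hab : ∀ i < m, a i + b i = s i * t i := by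
    intro i hi
    simp only [a, b, ← Finset.sum_add_distrib]
    have : ∀ j, t j * (s j - s (j+1)) + s (j+1) * (t j - t (j+1))
        = -((fun j => s j * t j) (j+1) - (fun j => s j * t j) j) := by intro j; simp; ring
    simp only [this, Finset.sum_neg_distrib]
    rw [Finset.sum_Ico_sub (fun j => s j * t j) hi.le]; simp [hsm]
  refine ⟨a, b, ?_, ?_, hab, ?_⟩
  · intro i
    exact Finset.sum_nonneg fun j _ => mul_nonneg (ht0 _) (sub_nonneg.2 (hs j.le_succ))
  · intro i
    exact Finset.sum_nonneg fun j _ => mul_nonneg (hs0 _) (sub_nonneg.2 (ht j.le_succ))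
  · intro i hi k hk
    rcases le_total i k with h | h
    · have h1 : t k * (s i - s k) + a k ≤ a i := by
        have : a i = ∑ j ∈ Finset.Ico i k, t j * (s j - s (j+1)) + a k :=
          (Finset.sum_Ico_consecutive _ h hk.le).symm
        rw [this]
        gcongr
        calc t k * (s i - s k) = ∑ j ∈ Finset.Ico i k, t k * (s j - s (j+1)) := by
              rw [← Finset.mul_sum]
              congr 1
              have := Finset.sum_Ico_sub s h
              rw [← neg_sub, ← this, ← Finset.sum_neg_distrib]
              simp
          _ ≤ _ := by
              apply Finset.sum_le_sum
              intro j hj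
              exact mul_le_mul_of_nonneg_right (ht (Finset.mem_Ico.1 hj).2.le)
                (sub_nonneg.2 (hs j.le_succ))
      have := hab k hk
      nlinarith
    · have h1 : s i * (t k - t i) + b i ≤ b k := by
        have : b k = ∑ j ∈ Finset.Ico k i, s (j+1) * (t j - t (j+1)) + b i :=
          (Finset.sum_Ico_consecutive _ h hi.le).symm
        rw [this]
        gcongr
        calc s i * (t k - t i) = ∑ j ∈ Finset.Ico k i, s i * (t j - t (j+1)) := by
              rw [← Finset.mul_sum]
              congr 1
              have := Finset.sum_Ico_sub t h
              rw [← neg_sub, ← this, ← Finset.sum_neg_distrib]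
              simp
          _ ≤ _ := by
              apply Finset.sum_le_sum
              intro j hj
              exact mul_le_mul_of_nonneg_right (hs (Finset.mem_Ico.1 hj).2)
                (sub_nonneg.2 (ht j.le_succ))
      have := hab i hi
      nlinarith

lemma aux_ext {m : ℕ} (s : Fin m → ℝ) (hs : Antitone s) (hs0 : ∀ i, 0 ≤ s i) :
    ∃ s' : ℕ → ℝ, Antitone s' ∧ (∀ i, 0 ≤ s' i) ∧ s' m = 0 ∧ ∀ i : Fin m, s' i = s i := by
  refine ⟨fun i => if h : i < m then s ⟨i, h⟩ else 0, ?_, ?_, by simp, by simp⟩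
  · intro i j h
    by_cases hj : j < m
    · have hi : i < m := lt_of_le_of_lt h hj
      simp only [hi, hj, dif_pos]
      exact hs h
    · simp only [hj, dif_neg, not_false_eq_true]
      split_ifs
      · exact hs0 _
      · exact le_rfl
  · intro i
    dsimp only
    split_ifs
    · exact hs0 _
    · exact le_rfl

lemma aux_substoch {m : ℕ} (s t : Fin m → ℝ) (hs : Antitone s) (ht : Antitone t)
    (hs0 : ∀ i, 0 ≤ s i) (ht0 : ∀ i, 0 ≤ t i) (M : Fin m → Fin m → ℝ)
    (hM : ∀ i k, 0 ≤ M i k) (hr : ∀ i, ∑ k, M i k ≤ 1) (hc : ∀ k, ∑ i, M i k ≤ 1) :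
    ∑ i, ∑ k, s i * t k * M i k ≤ ∑ i, s i * t i := by
  obtain ⟨s', h1, h2, h3, h4⟩ := aux_ext s hs hs0
  obtain ⟨t', g1, g2, g3, g4⟩ := aux_ext t ht ht0
  obtain ⟨a, b, ha, hb, hab, hle⟩ := aux_dual_nat m s' t' h1 g1 h2 g2 h3
  calc ∑ i, ∑ k, s i * t k * M i k ≤ ∑ i : Fin m, ∑ k : Fin m, (a i + b k) * M i k := by
        refine Finset.sum_le_sum fun i _ => Finset.sum_le_sum fun k _ => ?_
        apply mul_le_mul_of_nonneg_right _ (hM i k)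
        have := hle i i.2 k k.2
        rwa [h4, g4] at this
    _ = ∑ i : Fin m, a i * ∑ k, M i k + ∑ k : Fin m, b k * ∑ i, M i k := by
        simp only [add_mul, Finset.sum_add_distrib, Finset.mul_sum]
        congr 1
        exact Finset.sum_comm
    _ ≤ ∑ i : Fin m, a i * 1 + ∑ k : Fin m, b k * 1 := by
        gcongr with i _ k _
        · exact ha _
        · exact hr _
        · exact hb _
        · exact hc _
    _ = ∑ i, s i * t i := by
        simp only [mul_one, ← Finset.sum_add_distrib]
        refine Finset.sum_congr rfl fun i _ => ?_
        rw [hab i i.2, h4, g4]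

/-- von Neumann trace inequality -/
lemma aux_vn {m n : ℕ} (hmn : m ≤ n) (X : Matrix (Fin m) (Fin n) ℝ)
    (U : Matrix (Fin m) (Fin m) ℝ) (V : Matrix (Fin n) (Fin n) ℝ)
    (hU : Uᵀ * U = 1) (hU' : U * Uᵀ = 1) (hV' : V * Vᵀ = 1)
    (t : Fin m → ℝ) (ht : Antitone t) (ht0 : ∀ i, 0 ≤ t i) :
    (X * (U * (rdiag t : Matrix (Fin m) (Fin n) ℝ) * Vᵀ)ᵀ).trace ≤ ∑ i, sval X i * t i := by
  obtain ⟨W, hW, hW', hD⟩ := aux_decomp X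
  set s := sval X with hs
  let Y := Wᵀ * X * V
  have hYY : Y * Yᵀ = diagonal (fun i => s i * s i) := by
    rw [← hD]
    calc Y * Yᵀ = Wᵀ * X * (V * Vᵀ) * Xᵀ * W := by
          simp only [Y, Matrix.transpose_mul, Matrix.transpose_transpose, Matrix.mul_assoc]
      _ = _ := by rw [hV']; simp only [Matrix.mul_one, Matrix.mul_assoc]
  let C : Matrix (Fin m) (Fin n) ℝ := diagonal (fun i => (s i)⁻¹) * Y
  have hYrow : ∀ i, s i = 0 → ∀ j, Y i j = 0 := by
    intro i hi j
    have := congrFun (congrFun hYY i) i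
    rw [Matrix.mul_apply] at this
    simp only [transpose_apply, diagonal_apply_eq, hi, mul_zero] at this
    rw [Finset.sum_eq_zero_iff_of_nonneg (fun _ _ => mul_self_nonneg _)] at this
    exact mul_self_eq_zero.1 (this j (Finset.mem_univ _))
  have hYC : ∀ i j, Y i j = s i * C i j := by
    intro i j
    by_cases h : s i = 0
    · simp [h, hYrow i h j]
    · simp [C, Matrix.diagonal_mul, h]
  have hCC : C * Cᵀ = diagonal (fun i => if s i = 0 then 0 else 1) := by
    have : C * Cᵀ = diagonal (fun i => (s i)⁻¹) * (Y * Yᵀ) * diagonal (fun i => (s i)⁻¹) := by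
      simp only [C, Matrix.transpose_mul, diagonal_transpose, Matrix.mul_assoc]
    rw [this, hYY, diagonal_mul_diagonal, diagonal_mul_diagonal]
    congr 1
    funext i
    by_cases h : s i = 0
    · simp [h]
    · simp only [h, if_false]; field_simp
  have hCCC : C * Cᵀ * C = C := by
    rw [hCC]
    ext i j
    rw [Matrix.diagonal_mul]
    by_cases h : s i = 0
    · simp [h, C, Matrix.diagonal_mul]
    · simp [h]
  have hCrow : ∀ i, ∑ j, C i j ^ 2 ≤ 1 := by
    intro i
    have := congrFun (congrFun hCC i) i
    rw [Matrix.mul_apply] at this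
    simp only [transpose_apply, diagonal_apply_eq, ← sq] at this
    rw [this]; split_ifs <;> norm_num
  have hCcol : ∀ k, ∑ i, C i k ^ 2 ≤ 1 := by
    intro k
    have hR : (Cᵀ * C) * (Cᵀ * C) = Cᵀ * C := by
      rw [Matrix.mul_assoc, ← Matrix.mul_assoc C, hCCC]
    have hT : (Cᵀ * C)ᵀ = Cᵀ * C := by simp
    have e1 : ∑ i, C i k ^ 2 = (Cᵀ * C) k k := by
      simp [Matrix.mul_apply, sq]
    rw [e1]
    have e2 := congrFun (congrFun hR k) k
    rw [Matrix.mul_apply] at e2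
    have e3 : (Cᵀ * C) k k * (Cᵀ * C) k k ≤ (Cᵀ * C) k k := by
      conv_rhs => rw [← e2]
      apply Finset.single_le_sum (f := fun j => (Cᵀ * C) k j * (Cᵀ * C) j k) _ (Finset.mem_univ k)
      intro j _
      have : (Cᵀ * C) j k = (Cᵀ * C) k j := congrFun (congrFun hT k) j
      change 0 ≤ (Cᵀ * C) k j * (Cᵀ * C) j k
      rw [this]
      exact mul_self_nonneg _
    nlinarith
  let A := Wᵀ * U
  have hA1 : A * Aᵀ = 1 := by
    calc A * Aᵀ = Wᵀ * (U * Uᵀ) * W := by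
          simp only [A, Matrix.transpose_mul, Matrix.transpose_transpose, Matrix.mul_assoc]
      _ = 1 := by rw [hU', Matrix.mul_one, hW]
  have hA2 : Aᵀ * A = 1 := mul_eq_one_comm.1 hA1
  have hArow : ∀ i, ∑ k, A i k ^ 2 = 1 := by
    intro i
    have := congrFun (congrFun hA1 i) i
    simpa [Matrix.mul_apply, sq] using this
  have hAcol : ∀ k, ∑ i, A i k ^ 2 = 1 := by
    intro k
    have := congrFun (congrFun hA2 k) k
    simpa [Matrix.mul_apply, sq] using this
  have htr : (X * (U * (rdiag t : Matrix (Fin m) (Fin n) ℝ) * Vᵀ)ᵀ).trace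
      = ∑ i, ∑ k, s i * t k * (A i k * C i (Fin.castLE hmn k)) := by
    have e1 : (X * (U * (rdiag t : Matrix (Fin m) (Fin n) ℝ) * Vᵀ)ᵀ).trace = (Aᵀ * (Y * (rdiag t : Matrix (Fin m) (Fin n) ℝ)ᵀ)).trace := by
      have : Aᵀ * (Y * (rdiag t : Matrix (Fin m) (Fin n) ℝ)ᵀ)
          = Uᵀ * (W * Wᵀ) * (X * V * (rdiag t : Matrix (Fin m) (Fin n) ℝ)ᵀ) := by
        simp only [A, Y, Matrix.transpose_mul, Matrix.transpose_transpose, Matrix.mul_assoc]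
      rw [this, hW', Matrix.mul_one, Matrix.trace_mul_comm Uᵀ]
      simp only [Matrix.transpose_mul, Matrix.transpose_transpose, Matrix.mul_assoc]
    have e2 : ∀ i k, (Y * (rdiag t : Matrix (Fin m) (Fin n) ℝ)ᵀ) i k
        = Y i (Fin.castLE hmn k) * t k := by
      intro i k
      rw [Matrix.mul_apply, Finset.sum_eq_single (Fin.castLE hmn k)]
      · simp [rdiag]
      · intro b _ hb
        have : (b : ℕ) ≠ k := fun h' => hb (Fin.ext h')
        simp [rdiag, this]
      · simp
    rw [e1, Matrix.trace, Finset.sum_comm]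
    refine Finset.sum_congr rfl fun k _ => ?_
    rw [Matrix.diag_apply, Matrix.mul_apply]
    refine Finset.sum_congr rfl fun i _ => ?_
    rw [e2, hYC, transpose_apply]; ring
  rw [htr]
  have hinj : ∀ i, ∑ k : Fin m, C i (Fin.castLE hmn k) ^ 2 ≤ ∑ j, C i j ^ 2 := by
    intro i
    rw [← Finset.sum_image (f := fun j => C i j ^ 2) (g := Fin.castLE hmn)
      (fun a _ b _ h => Fin.castLE_injective hmn h)]
    exact Finset.sum_le_sum_of_subset_of_nonneg (Finset.subset_univ _) (fun _ _ _ => sq_nonneg _)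
  refine le_trans (Finset.sum_le_sum fun i _ => Finset.sum_le_sum fun k _ => ?_)
    (aux_substoch s t (aux_sval_anti X) ht (aux_sval_nonneg X) ht0
      (fun i k => (A i k ^ 2 + C i (Fin.castLE hmn k) ^ 2) / 2) ?_ ?_ ?_)
  · apply mul_le_mul_of_nonneg_left _ (mul_nonneg (aux_sval_nonneg X i) (ht0 k))
    nlinarith [sq_nonneg (A i k - C i (Fin.castLE hmn k))]
  · intro i k; positivity
  · intro i
    rw [← Finset.sum_div, Finset.sum_add_distrib]
    linarith [hArow i, hinj i, hCrow i]
  · intro k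
    rw [← Finset.sum_div, Finset.sum_add_distrib]
    linarith [hAcol k, hCcol (Fin.castLE hmn k)]

lemma aux_svd_mul {m n : ℕ} (hmn : m ≤ n)
    (U : Matrix (Fin m) (Fin m) ℝ) (V : Matrix (Fin n) (Fin n) ℝ)
    (hV : Vᵀ * V = 1) (d : Fin m → ℝ) :
    (U * (rdiag d : Matrix (Fin m) (Fin n) ℝ) * Vᵀ) * (U * (rdiag d : Matrix (Fin m) (Fin n) ℝ) * Vᵀ)ᵀ = U * diagonal (fun i => d i * d i) * Uᵀ := by
  rw [← aux_rdiag hmn]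
  calc _ = U * (rdiag d : Matrix (Fin m) (Fin n) ℝ) * (Vᵀ * V) * (rdiag d : Matrix (Fin m) (Fin n) ℝ)ᵀ * Uᵀ := by
        simp only [Matrix.transpose_mul, Matrix.transpose_transpose, Matrix.mul_assoc]
    _ = _ := by rw [hV]; simp only [Matrix.mul_one, Matrix.mul_assoc]

lemma aux_svd_frob {m n : ℕ} (hmn : m ≤ n)
    (U : Matrix (Fin m) (Fin m) ℝ) (V : Matrix (Fin n) (Fin n) ℝ) (hU : Uᵀ * U = 1)
    (hV : Vᵀ * V = 1) (d : Fin m → ℝ) :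
    frobNorm (U * (rdiag d : Matrix (Fin m) (Fin n) ℝ) * Vᵀ) ^ 2 = ∑ i, d i * d i := by
  rw [aux_frob, aux_svd_mul hmn U V hV, Matrix.trace_mul_comm, ← Matrix.mul_assoc, hU,
    Matrix.one_mul, Matrix.trace_diagonal]

lemma aux_frob_sval {m n : ℕ} (X : Matrix (Fin m) (Fin n) ℝ) :
    frobNorm X ^ 2 = ∑ i, sval X i * sval X i := by
  obtain ⟨W, hW, hW', hD⟩ := aux_decomp X
  rw [aux_frob, ← Matrix.trace_diagonal, ← hD, Matrix.trace_mul_comm (Wᵀ * (X * Xᵀ)),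
    ← Matrix.mul_assoc, hW', Matrix.one_mul]

lemma aux_frob_sub {m n : ℕ} (X B : Matrix (Fin m) (Fin n) ℝ) :
    frobNorm (X - B) ^ 2 = frobNorm X ^ 2 - 2 * (X * Bᵀ).trace + frobNorm B ^ 2 := by
  have h : (B * Xᵀ).trace = (X * Bᵀ).trace := by
    rw [← Matrix.trace_transpose]; simp
  rw [aux_frob, aux_frob, aux_frob, Matrix.transpose_sub, Matrix.sub_mul, Matrix.mul_sub,
    Matrix.mul_sub, Matrix.trace_sub, Matrix.trace_sub, Matrix.trace_sub, h]
  ring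

/-- Core: closed-form global minimizer of the weighted nuclear norm proximal
subproblem: given a full SVD `B = U diag(Σ) Vᵀ` with nonincreasing singular values `Σ`,
and weights in ascending order `0 < w₁ ≤ ⋯ ≤ w_m`, the matrix
`X* = U diag([Σᵢ − λwᵢ/(2β)]₊) Vᵀ` globally minimizes
`G(X) = (β/2)‖X − B‖_F² + (λ/2) ∑ᵢ wᵢ σᵢ(X)`. -/
theorem aux_core {m n : ℕ} (hmn : m ≤ n)
    (B : Matrix (Fin m) (Fin n) ℝ)
    (U : Matrix (Fin m) (Fin m) ℝ) (V : Matrix (Fin n) (Fin n) ℝ)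
    (hU : Uᵀ * U = 1) (hU' : U * Uᵀ = 1)
    (hV : Vᵀ * V = 1) (hV' : V * Vᵀ = 1)
    (Sv : Fin m → ℝ) (hSv : Sv = sval B)
    (hB : B = U * (rdiag Sv : Matrix (Fin m) (Fin n) ℝ) * Vᵀ)
    (lam β : ℝ) (hlam : 0 < lam) (hβ : 0 < β)
    (w : Fin m → ℝ) (hw0 : ∀ i, 0 < w i) (hwmono : Monotone w) :
    ∀ X : Matrix (Fin m) (Fin n) ℝ,
      β / 2 * frobNorm (U * (rdiag (fun i => max (Sv i - lam * w i / (2 * β)) 0) : Matrix (Fin m) (Fin n) ℝ) * Vᵀ - B) ^ 2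
        + lam / 2 * ∑ i, w i *
            sval (U * (rdiag (fun i => max (Sv i - lam * w i / (2 * β)) 0) : Matrix (Fin m) (Fin n) ℝ) * Vᵀ) i
      ≤ β / 2 * frobNorm (X - B) ^ 2 + lam / 2 * ∑ i, w i * sval X i := by
  intro X
  have hS0 : ∀ i, 0 ≤ Sv i := fun i => hSv ▸ aux_sval_nonneg B i
  have hSa : Antitone Sv := hSv ▸ aux_sval_anti B
  set d : Fin m → ℝ := fun i => max (Sv i - lam * w i / (2 * β)) 0 with hd
  have hd0 : ∀ i, 0 ≤ d i := fun i => le_max_right _ _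
  have hda : Antitone d := by
    intro i j h
    have h1 := hSa h
    have h2 := hwmono h
    apply max_le_max _ le_rfl
    have : lam * w i / (2 * β) ≤ lam * w j / (2 * β) := by gcongr
    linarith
  have hsd : sval (U * (rdiag d : Matrix (Fin m) (Fin n) ℝ) * Vᵀ) = d :=
    aux_sval_eq _ U hU d hd0 hda (aux_svd_mul hmn U V hV d)
  have hdiff : U * (rdiag d : Matrix (Fin m) (Fin n) ℝ) * Vᵀ - B = U * (rdiag (fun i => d i - Sv i) : Matrix (Fin m) (Fin n) ℝ) * Vᵀ := by
    rw [hB, ← Matrix.sub_mul, ← Matrix.mul_sub]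
    congr 2
    ext i j
    simp only [rdiag, Matrix.sub_apply, Matrix.of_apply]
    split_ifs <;> simp
  rw [hsd, hdiff, aux_svd_frob hmn U V hU hV, aux_frob_sub, aux_frob_sval X]
  have hBf : frobNorm B ^ 2 = ∑ i, Sv i * Sv i := by rw [hB]; exact aux_svd_frob hmn U V hU hV Sv
  have hvn : (X * Bᵀ).trace ≤ ∑ i, sval X i * Sv i := by
    rw [hB]; exact aux_vn hmn X U V hU hU' hV' Sv hSa hS0
  rw [hBf]
  have key : ∀ i, β / 2 * ((d i - Sv i) * (d i - Sv i)) + lam / 2 * (w i * d i)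
      ≤ β / 2 * (sval X i * sval X i - 2 * (sval X i * Sv i) + Sv i * Sv i)
        + lam / 2 * (w i * sval X i) := by
    intro i
    have hx := aux_sval_nonneg X i
    generalize sval X i = x at hx ⊢
    obtain ⟨c, hc⟩ : ∃ c, c = lam * w i / (2 * β) := ⟨_, rfl⟩
    have hlw : lam * w i = 2 * β * c := by rw [hc]; field_simp
    have hdi : d i = max (Sv i - c) 0 := by rw [hc]
    have hq : (d i - Sv i) * (d i - Sv i) + 2 * c * d i
        ≤ (x * x - 2 * (x * Sv i) + Sv i * Sv i) + 2 * c * x := by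
      rcases le_total (Sv i - c) 0 with h | h
      · rw [hdi, max_eq_right h]; nlinarith [mul_nonneg hx (sub_nonneg.2 h)]
      · rw [hdi, max_eq_left h]; nlinarith [sq_nonneg (x - (Sv i - c))]
    have := mul_le_mul_of_nonneg_left hq (by positivity : 0 ≤ β / 2)
    have e1 : lam / 2 * (w i * d i) = β / 2 * (2 * c * d i) := by linear_combination d i / 2 * hlw
    have e2 : lam / 2 * (w i * x) = β / 2 * (2 * c * x) := by linear_combination x / 2 * hlw
    rw [e1, e2]; linarith
  have hsum := Finset.sum_le_sum fun i (_ : i ∈ Finset.univ) => key i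
  simp only [Finset.sum_add_distrib, Finset.sum_sub_distrib, ← Finset.mul_sum] at hsum
  have := mul_le_mul_of_nonneg_left hvn hβ.le
  linarith

/-- Closed-form global minimizer of the weighted nuclear norm proximal
subproblem: given a full SVD `B = U diag(Σ) Vᵀ` with nonincreasing singular values `Σ`,
and weights in ascending order `0 < w₁ ≤ ⋯ ≤ w_m`, the matrix
`X* = U diag([Σᵢ − λwᵢ/(2β)]₊) Vᵀ` globally minimizes
`G(X) = (β/2)‖X − B‖_F² + (λ/2) ∑ᵢ wᵢ σᵢ(X)`. -/
theorem stmt_0 {m n : ℕ} (hmn : m ≤ n)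
    (B : Matrix (Fin m) (Fin n) ℝ)
    (U : Matrix (Fin m) (Fin m) ℝ) (V : Matrix (Fin n) (Fin n) ℝ)
    (hU : Uᵀ * U = 1) (hU' : U * Uᵀ = 1)
    (hV : Vᵀ * V = 1) (hV' : V * Vᵀ = 1)
    (Sv : Fin m → ℝ) (hSv : Sv = sval B)
    (hB : B = U * rdiag Sv * Vᵀ)
    (lam β : ℝ) (hlam : 0 < lam) (hβ : 0 < β)
    (w : Fin m → ℝ) (hw0 : ∀ i, 0 < w i) (hwmono : Monotone w) :
    ∀ X : Matrix (Fin m) (Fin n) ℝ,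
      β / 2 * frobNorm (U * rdiag (fun i => max (Sv i - lam * w i / (2 * β)) 0) * Vᵀ - B) ^ 2
        + lam / 2 * ∑ i, w i *
            sval (U * rdiag (fun i => max (Sv i - lam * w i / (2 * β)) 0) * Vᵀ) i
      ≤ β / 2 * frobNorm (X - B) ^ 2 + lam / 2 * ∑ i, w i * sval X i := by
  intro X
  exact aux_core hmn B U V hU hU' hV hV' Sv hSv hB lam β hlam hβ w hw0 hwmono X
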